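/- Let Ω be a finite nonempty set, and let < and ≤ be binary relations on the powerset of Ω satisfying: (A0) ∅ < {ω} for every ω ∈ Ω; (A1) if A ≤ B then it is not the case that B < A; (A2) if A < B then A ≤ B; and (Scott) whenever (A_i)_{i≤n} ≡₀ (B_i)_{i≤n} and B_i ≤ A_i for all i ≤ n, then A_i ≤ B_i for all i ≤ n. Then there exists a regular probability measure μ on Ω such that for all A, B ⊆ Ω, A < B implies μ(A) < μ(B) and A ≤ B implies μ(A) ≤ μ(B). -/

import Mathlib

open Finset

variable {Ω : Type*}

/-- The measure of a finite set of states given weights `w`: `μ(A) = ∑_{ω ∈ A} w ω`. -/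
noncomputable def mea (w : Ω → ℝ) (A : Finset Ω) : ℝ := ∑ ω ∈ A, w ω

/-- `w` is a probability weight function: nonnegative and summing to 1. -/
def IsProbWeight [Fintype Ω] (w : Ω → ℝ) : Prop :=
  (∀ ω, 0 ≤ w ω) ∧ (∑ ω, w ω) = 1

/-- The measure is regular: only the empty set has measure 0. -/
def RegularW (w : Ω → ℝ) : Prop := ∀ X : Finset Ω, mea w X = 0 → X = ∅

/-- Conditional measure `μ_A(X) = μ(A ∩ X) / μ(A)`. -/
noncomputable def condMea [DecidableEq Ω] (w : Ω → ℝ) (A X : Finset Ω) : ℝ := mea w (A ∩ X) / mea w A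

/-- `X` is `(m,t)`-stable for a set function `m`: `X` is nonempty and for every `E` with
`X ∩ E ≠ ∅` and `m E > 0`, `m (X ∩ E) / m E > t`. -/
def StableFor [DecidableEq Ω] (m : Finset Ω → ℝ) (t : ℝ) (X : Finset Ω) : Prop :=
  X.Nonempty ∧ ∀ E : Finset Ω, (X ∩ E).Nonempty → 0 < m E → t < m (X ∩ E) / m E

/-- `S` is the `⊆`-least `(m,t)`-stable set. -/
def IsLeastStable [DecidableEq Ω] (m : Finset Ω → ℝ) (t : ℝ) (S : Finset Ω) : Prop :=
  StableFor m t S ∧ ∀ X : Finset Ω, StableFor m t X → S ⊆ X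

/-- `w` represents the selection function `σ` for threshold `t`. -/
def RepresentsAt [DecidableEq Ω] (w : Ω → ℝ) (t : ℝ) (σ : Finset Ω → Finset Ω) : Prop :=
  ∀ E : Finset Ω, (0 < mea w E → IsLeastStable (condMea w E) t (σ E)) ∧
    (mea w E = 0 → σ E = ∅)

/-- Selection axiom (S1): `σ(X) = ∅` only if `X = ∅`. -/
def SelA1 (σ : Finset Ω → Finset Ω) : Prop := ∀ X : Finset Ω, σ X = ∅ → X = ∅

/-- Selection axiom (S2): `σ(X) ⊆ X`. -/
def SelA2 (σ : Finset Ω → Finset Ω) : Prop := ∀ X : Finset Ω, σ X ⊆ X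

/-- Selection axiom (S3): if `σ(A) ∩ B ≠ ∅` then `σ(A ∩ B) ⊆ σ(A) ∩ B`. -/
def SelA3 [DecidableEq Ω] (σ : Finset Ω → Finset Ω) : Prop :=
  ∀ A B : Finset Ω, (σ A ∩ B).Nonempty → σ (A ∩ B) ⊆ σ A ∩ B

/-- Selection axiom (S4ₙ) for every `n`: if `σ(A ∪ Xᵢ) = Xᵢ` for all `i`, then
`σ(A ∪ ⋃ᵢ Xᵢ) ⊆ ⋃ᵢ Xᵢ`. -/
def SelA4 [DecidableEq Ω] (σ : Finset Ω → Finset Ω) : Prop :=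
  ∀ n : ℕ, ∀ A : Finset Ω, ∀ X : Fin (n + 1) → Finset Ω,
    (∀ i, σ (A ∪ X i) = X i) →
    σ (A ∪ univ.biUnion X) ⊆ univ.biUnion X

/-- `ω ≻_σ X` iff `ω ∉ X` and `σ (X ∪ {ω}) = {ω}`. -/
def succS [DecidableEq Ω] (σ : Finset Ω → Finset Ω) (ω : Ω) (X : Finset Ω) : Prop :=
  ω ∉ X ∧ σ (X ∪ {ω}) = {ω}

/-- `X ⪰_σ ω` iff `ω ∈ X` or `σ (X ∪ {ω}) ≠ {ω}`. -/
def succeqS [DecidableEq Ω] (σ : Finset Ω → Finset Ω) (X : Finset Ω) (ω : Ω) : Prop :=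
  ω ∈ X ∨ σ (X ∪ {ω}) ≠ {ω}

/-- `A ⪰*_σ B` iff either `A` is a singleton `{a}` with `a ≻_σ B`, or `B` is a singleton
`{b}` with `A ⪰_σ b`. -/
def geStar [DecidableEq Ω] (σ : Finset Ω → Finset Ω) (A B : Finset Ω) : Prop :=
  (∃ a, A = {a} ∧ succS σ a B) ∨ (∃ b, B = {b} ∧ succeqS σ A b)

/-- Two sequences of sets are balanced: every state occurs in exactly as many `A i`'s
as `B i`'s. -/
def BalancedSeq {n : ℕ} (A B : Fin n → Finset Ω) : Prop :=
  ∀ ω : Ω, Nat.card {i // ω ∈ A i} = Nat.card {i // ω ∈ B i}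

/-- `(A_i) ≤₀ (B_i)`: every state occurs in at most as many `A i`'s as `B i`'s. -/
def DomSeq {n : ℕ} (A B : Fin n → Finset Ω) : Prop :=
  ∀ ω : Ω, Nat.card {i // ω ∈ A i} ≤ Nat.card {i // ω ∈ B i}

/-- The (Scott) axiom for the induced order `⪰*_σ`. -/
def ScottAx [DecidableEq Ω] (σ : Finset Ω → Finset Ω) : Prop :=
  ∀ n : ℕ, ∀ A B : Fin (n + 1) → Finset Ω, BalancedSeq A B →
    (∀ i, geStar σ (A i) (B i)) → ∀ i, geStar σ (B i) (A i)


/-- Farkas' lemma over `ℚ`, algebraic form. -/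
theorem farkas_aux {M ι : Type*} [AddCommGroup M] [Module ℚ M] [DecidableEq ι] (s : Finset ι) :
    ∀ (a : ι → M →ₗ[ℚ] ℚ) (b : M →ₗ[ℚ] ℚ),
    (∀ x, (∀ i ∈ s, 0 ≤ a i x) → 0 ≤ b x) →
    ∃ c : ι → ℚ, (∀ i, 0 ≤ c i) ∧ ∀ x, b x = ∑ i ∈ s, c i * a i x := by
  induction s using Finset.induction_on with
  | empty =>
    intro a b h
    refine ⟨fun _ => 0, fun _ => le_rfl, fun x => ?_⟩
    have h1 := h x (by simp)
    have h2 := h (-x) (by simp)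
    simp only [map_neg, Finset.sum_empty] at *
    linarith
  | insert j s hj ih =>
    intro a b h
    by_cases hb : ∀ x, (∀ i ∈ s, 0 ≤ a i x) → 0 ≤ b x
    · obtain ⟨c, hc, hc'⟩ := ih a b hb
      refine ⟨Function.update c j 0, fun i => ?_, fun x => ?_⟩
      · by_cases hi : i = j
        · subst hi; simp
        · simp [hi, hc i]
      · rw [Finset.sum_insert hj, hc' x]
        simp only [Function.update_self, zero_mul, zero_add]
        refine Finset.sum_congr rfl fun i hi => ?_
        have : i ≠ j := fun e => hj (e ▸ hi)
        simp [this]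
    · push Not at hb
      obtain ⟨y, hy, hby⟩ := hb
      have hjy : a j y < 0 := by
        by_contra hcon
        push Not at hcon
        have := h y (by
          intro i hi
          rcases Finset.mem_insert.1 hi with rfl | hi
          · exact hcon
          · exact hy i hi)
        linarith
      obtain ⟨z, hz, hbz, hjz⟩ : ∃ z, (∀ i ∈ s, 0 ≤ a i z) ∧ b z < 0 ∧ a j z = -1 := by
        have hp : 0 < (-(a j y))⁻¹ := inv_pos.2 (by linarith)
        refine ⟨(-(a j y))⁻¹ • y, fun i hi => ?_, ?_, ?_⟩
        · simp only [map_smul, smul_eq_mul]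
          exact mul_nonneg hp.le (hy i hi)
        · simp only [map_smul, smul_eq_mul]
          exact mul_neg_of_pos_of_neg hp hby
        · simp only [map_smul, smul_eq_mul]
          have : a j y ≠ 0 := hjy.ne
          field_simp
      let T : M →ₗ[ℚ] M := LinearMap.id + (a j).smulRight z
      have hT : ∀ x, T x = x + a j x • z := fun x => by simp [T]
      obtain ⟨c, hc, hc'⟩ := ih (fun i => (a i).comp T) (b.comp T) (by
        intro x hx
        refine h (T x) fun i hi => ?_
        rcases Finset.mem_insert.1 hi with rfl | hi
        · rw [hT]; simp [hjz]
        · exact hx i hi)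
      have hnn : 0 ≤ (∑ i ∈ s, c i * a i z) - b z := by
        have := Finset.sum_nonneg fun i hi => mul_nonneg (hc i) (hz i hi)
        linarith
      refine ⟨Function.update c j ((∑ i ∈ s, c i * a i z) - b z), fun i => ?_, fun x => ?_⟩
      · by_cases hi : i = j
        · subst hi; simpa using hnn
        · simp [hi, hc i]
      · rw [Finset.sum_insert hj, Function.update_self]
        have e : ∑ i ∈ s, Function.update c j ((∑ i ∈ s, c i * a i z) - b z) i * a i x
            = ∑ i ∈ s, c i * a i x := by
          refine Finset.sum_congr rfl fun i hi => ?_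
          have : i ≠ j := fun e => hj (e ▸ hi)
          simp [this]
        rw [e]
        have h1 := hc' x
        simp only [LinearMap.comp_apply, hT, map_add, map_smul, smul_eq_mul, mul_add,
          Finset.sum_add_distrib] at h1
        have e2 : ∑ i ∈ s, c i * (a j x * a i z) = a j x * ∑ i ∈ s, c i * a i z := by
          rw [Finset.mul_sum]
          exact Finset.sum_congr rfl fun i _ => by ring
        rw [e2] at h1
        linear_combination h1

/-- Clearing denominators of finitely many nonnegative rationals. -/
theorem clear_denoms {ι : Type*} [DecidableEq ι] (s : Finset ι) (c : ι → ℚ)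
    (hc : ∀ i, 0 ≤ c i) : ∃ (D : ℕ) (k : ι → ℕ), 0 < D ∧ ∀ i ∈ s, (k i : ℚ) = D * c i := by
  refine ⟨∏ i ∈ s, (c i).den,
    fun i => (∏ l ∈ s.erase i, (c l).den) * (c i).num.toNat,
    Finset.prod_pos fun i _ => (c i).den_pos, fun i hi => ?_⟩
  rw [← Finset.mul_prod_erase s _ hi]
  have h1 : (((c i).num.toNat : ℤ)) = (c i).num := Int.toNat_of_nonneg (Rat.num_nonneg.2 (hc i))
  have h2 : (((c i).num.toNat : ℕ) : ℚ) = (c i).num := by exact_mod_cast h1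
  have h3 : ((c i).den : ℚ) * c i = (c i).num := by
    rw [mul_comm]; exact Rat.mul_den_eq_num _
  push_cast at h2 ⊢
  rw [h2, ← h3]; ring

/-- The evaluation functional `x ↦ x(B) - x(A)`. -/
noncomputable def evalDiff (p : Finset Ω × Finset Ω) : (Ω → ℚ) →ₗ[ℚ] ℚ :=
  (∑ ω ∈ p.2, LinearMap.proj ω) - ∑ ω ∈ p.1, LinearMap.proj ω

theorem evalDiff_apply (p : Finset Ω × Finset Ω) (x : Ω → ℚ) :
    evalDiff p x = ∑ ω ∈ p.2, x ω - ∑ ω ∈ p.1, x ω := by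
  simp [evalDiff, LinearMap.sum_apply]

theorem scott_contra [Fintype Ω]
    (le : Finset Ω → Finset Ω → Prop)
    (hScott : ∀ n : ℕ, ∀ A B : Fin (n + 1) → Finset Ω, BalancedSeq A B →
      (∀ i, le (B i) (A i)) → ∀ i, le (A i) (B i))
    (s : Finset (Finset Ω × Finset Ω)) (hs : ∀ p ∈ s, le p.1 p.2)
    (k : Finset Ω × Finset Ω → ℕ)
    (hk : ∀ x : Ω → ℚ, ∑ p ∈ s, (k p : ℚ) * evalDiff p x = 0)
    (p : Finset Ω × Finset Ω) (hp : p ∈ s) (hkp : 0 < k p) : le p.2 p.1 := by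
  classical
  let J := Σ q : s, Fin (k q.1)
  let j0 : J := ⟨⟨p, hp⟩, ⟨0, hkp⟩⟩
  obtain ⟨n, hn⟩ : ∃ n, Fintype.card J = n + 1 :=
    Nat.exists_eq_succ_of_ne_zero (Fintype.card_pos_iff.2 ⟨j0⟩).ne'
  let e : Fin (n + 1) ≃ J := (Fintype.equivFinOfCardEq hn).symm
  have key := hScott n (fun i => (e i).1.1.2) (fun i => (e i).1.1.1) ?_
    (fun i => hs _ (e i).1.2) (e.symm j0)
  · simpa [j0] using key
  · intro ω
    have count : ∀ f : Finset Ω × Finset Ω → Finset Ω,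
        ((Nat.card {i // ω ∈ f (e i).1.1} : ℕ) : ℚ)
          = ∑ q ∈ s, (k q : ℚ) * (if ω ∈ f q then 1 else 0) := by
      intro f
      rw [Nat.card_eq_fintype_card, Fintype.card_subtype, Finset.card_filter]
      push_cast
      rw [Equiv.sum_comp e (fun j : J => if ω ∈ f j.1.1 then (1 : ℚ) else 0),
        Fintype.sum_sigma]
      rw [← Finset.sum_coe_sort s (fun q => (k q : ℚ) * (if ω ∈ f q then 1 else 0))]
      refine Finset.sum_congr rfl fun q _ => ?_
      refine (Finset.sum_const (if ω ∈ f q.1 then (1 : ℚ) else 0)).trans ?_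
      rw [Finset.card_univ, Fintype.card_fin, nsmul_eq_mul]
    have h := hk (Pi.single ω 1)
    have single : ∀ A : Finset Ω, ∑ v ∈ A, (Pi.single ω 1 : Ω → ℚ) v = if ω ∈ A then 1 else 0 := by
      intro A
      simp [Pi.single_apply]
    simp only [evalDiff_apply, single, mul_sub, Finset.sum_sub_distrib] at h
    have h1 := count Prod.fst
    have h2 := count Prod.snd
    have : ((Nat.card {i // ω ∈ (e i).1.1.2} : ℕ) : ℚ) = (Nat.card {i // ω ∈ (e i).1.1.1} : ℕ) := by
      rw [h1, h2]; linarith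
    exact_mod_cast this

theorem stmt2 [Fintype Ω] [Nonempty Ω]
    (lt le : Finset Ω → Finset Ω → Prop)
    (hA0 : ∀ ω : Ω, lt ∅ {ω})
    (hA1 : ∀ A B : Finset Ω, le A B → ¬ lt B A)
    (hA2 : ∀ A B : Finset Ω, lt A B → le A B)
    (hScott : ∀ n : ℕ, ∀ A B : Fin (n + 1) → Finset Ω, BalancedSeq A B →
      (∀ i, le (B i) (A i)) → ∀ i, le (A i) (B i)) :
    ∃ w : Ω → ℝ, IsProbWeight w ∧ RegularW w ∧
      (∀ A B : Finset Ω, lt A B → mea w A < mea w B) ∧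
      (∀ A B : Finset Ω, le A B → mea w A ≤ mea w B) := by
  classical
  let s : Finset (Finset Ω × Finset Ω) := univ.filter fun p => le p.1 p.2
  have hs : ∀ p ∈ s, le p.1 p.2 := fun p hp => (Finset.mem_filter.1 hp).2
  have hs' : ∀ A B, le A B → (A, B) ∈ s := fun A B h => Finset.mem_filter.2 ⟨mem_univ _, h⟩
  have step : ∀ p : Finset Ω × Finset Ω, ∃ x : Ω → ℚ, (∀ q ∈ s, 0 ≤ evalDiff q x) ∧
      (lt p.1 p.2 → 0 < evalDiff p x) := by
    intro p
    by_cases hlt : lt p.1 p.2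
    swap
    · exact ⟨0, by simp, fun h => absurd h hlt⟩
    by_contra hcon
    push Not at hcon
    have hps : p ∈ s := hs' _ _ (hA2 _ _ hlt)
    obtain ⟨c, hc, hc'⟩ := farkas_aux s (fun q => evalDiff q) (-evalDiff p) (by
      intro x hx
      have := (hcon x hx).2
      simpa using this)
    obtain ⟨D, k, hD, hk⟩ := clear_denoms s c hc
    refine hA1 _ _ (scott_contra le hScott s hs (fun q => k q + if q = p then D else 0)
      ?_ p hps (by simp; omega)) hlt
    intro x
    have e1 : ∑ q ∈ s, (k q : ℚ) * evalDiff q x = D * ∑ q ∈ s, c q * evalDiff q x := by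
      rw [Finset.mul_sum]
      exact Finset.sum_congr rfl fun q hq => by rw [hk q hq]; ring
    have h1 := hc' x
    simp only [LinearMap.neg_apply] at h1
    push_cast
    simp only [add_mul, Finset.sum_add_distrib, e1, ← h1, ite_mul, zero_mul]
    rw [Finset.sum_ite_eq' s p, if_pos hps]
    ring
  choose x hx hx' using step
  let y : Ω → ℚ := ∑ p, x p
  have hy : ∀ q, evalDiff q y = ∑ p, evalDiff q (x p) := fun q => by simp [y]
  have hle : ∀ A B, le A B → 0 ≤ evalDiff (A, B) y := fun A B h => by
    rw [hy]; exact Finset.sum_nonneg fun p _ => hx p _ (hs' A B h)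
  have hlt : ∀ A B, lt A B → 0 < evalDiff (A, B) y := fun A B h => by
    rw [hy]
    exact Finset.sum_pos' (fun p _ => hx p _ (hs' A B (hA2 _ _ h)))
      ⟨(A, B), mem_univ _, hx' (A, B) h⟩
  have hpos : ∀ ω, 0 < y ω := fun ω => by
    have := hlt _ _ (hA0 ω)
    simpa [evalDiff_apply] using this
  have hS : 0 < ∑ ω, y ω := Finset.sum_pos (fun ω _ => hpos ω) univ_nonempty
  have hm : ∀ A, mea (fun ω => ((y ω / ∑ ω, y ω : ℚ) : ℝ)) A
      = (((∑ ω ∈ A, y ω) / ∑ ω, y ω : ℚ) : ℝ) := fun A => by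
    rw [mea, ← Rat.cast_sum, Finset.sum_div]
  refine ⟨fun ω => ((y ω / ∑ ω, y ω : ℚ) : ℝ), ⟨fun ω => ?_, ?_⟩, ?_, ?_, ?_⟩
  · exact Rat.cast_nonneg.2 (div_pos (hpos ω) hS).le
  · have := hm univ
    rw [mea, div_self hS.ne'] at this
    simpa using this
  · intro X hX
    by_contra hne
    rw [hm] at hX
    have h1 : 0 < ∑ ω ∈ X, y ω :=
      Finset.sum_pos (fun ω _ => hpos ω) (Finset.nonempty_iff_ne_empty.2 hne)
    have h2 := (div_pos h1 hS).ne'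
    exact h2 (by exact_mod_cast hX)
  · intro A B h
    rw [hm, hm]
    have := hlt A B h
    rw [evalDiff_apply] at this
    exact Rat.cast_lt.2 (div_lt_div_of_pos_right (sub_pos.1 this) hS)
  · intro A B h
    rw [hm, hm]
    have := hle A B h
    rw [evalDiff_apply] at this
    exact Rat.cast_le.2 (div_le_div_of_nonneg_right (sub_nonneg.1 this) hS.le)
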